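/- Let n ≥ 2 and let η ∈ ℝⁿ be arbitrary. Define the n×n matrices M₁ and M₂ by (M₁)_{ij} = σ₁(η|i)·σ₁(η|j) and (M₂)_{ij} = (1−δ_{ij})·σ₂(η). Then det(M₁ − M₂) = (n−1)·σ₂(η)^{n}. -/

import Mathlib

open Finset

/-- The `k`-th elementary symmetric polynomial of `η : Fin n → ℝ`. -/
noncomputable def sigmaE (n k : ℕ) (η : Fin n → ℝ) : ℝ :=
  ∑ s ∈ Finset.univ.powersetCard k, ∏ i ∈ s, η i

/-- `σ₁(η|i) = ∑_{j ≠ i} η j`. -/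
noncomputable def sigma1rest (n : ℕ) (η : Fin n → ℝ) (i : Fin n) : ℝ :=
  ∑ j ∈ Finset.univ.erase i, η j

/-- The Gårding cone `Γ₂`. -/
def Gamma2 (n : ℕ) (η : Fin n → ℝ) : Prop :=
  0 < sigmaE n 1 η ∧ 0 < sigmaE n 2 η

/-
Put `e = σ₂(η)` and `a i = σ₁(η|i)`. Then `M₁ - M₂ = e I + a aᵀ - e 1 1ᵀ` is a rank-two perturbation
of a scalar matrix, so its determinant is `e ^ (n - 2)` times a `2 × 2` determinant in the sums
`∑ a i` and `∑ (a i) ^ 2`. Newton's identity `2 e = σ₁ ^ 2 - ∑ (η i) ^ 2` evaluates the latter to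
`(n - 1) e ^ 2`. Exchanging the two factors of the perturbation through characteristic polynomials
avoids dividing by `e`, which may vanish.
-/

section Determinant

variable {m n R : Type*} [Fintype m] [DecidableEq m] [Fintype n] [DecidableEq n] [CommRing R]

theorem det_scalar_add_mul_comm_of_le (c : R) (A : Matrix m n R) (B : Matrix n m R)
    (hle : Fintype.card n ≤ Fintype.card m) :
    (Matrix.scalar m c + A * B).det =
      c ^ (Fintype.card m - Fintype.card n) * (Matrix.scalar n c + B * A).det := by
  have h := congrArg (Polynomial.eval c) (Matrix.charpoly_mul_comm_of_le (-A) B hle)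
  simpa only [Polynomial.eval_mul, Polynomial.eval_pow, Polynomial.eval_X, Matrix.eval_charpoly,
    Matrix.neg_mul, Matrix.mul_neg, sub_neg_eq_add] using h

theorem det_scalar_add_vecMulVec_add_vecMulVec [Nontrivial m] (c : R) (u v w x : m → R) :
    (Matrix.scalar m c + (Matrix.vecMulVec u v + Matrix.vecMulVec w x)).det =
      c ^ (Fintype.card m - 2) * ((c + v ⬝ᵥ u) * (c + x ⬝ᵥ w) - (v ⬝ᵥ w) * (x ⬝ᵥ u)) := by
  let A : Matrix m (Fin 2) R := Matrix.of fun i => ![u i, w i]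
  let B : Matrix (Fin 2) m R := Matrix.of ![v, x]
  have hAB : Matrix.vecMulVec u v + Matrix.vecMulVec w x = A * B := by
    ext i j
    simp [A, B, Matrix.vecMulVec_apply, Matrix.mul_apply, Fin.sum_univ_two]
  have hcard : Fintype.card (Fin 2) ≤ Fintype.card m :=
    (Fintype.card_fin 2).trans_le Fintype.one_lt_card
  rw [hAB, det_scalar_add_mul_comm_of_le c A B hcard, Matrix.det_fin_two, Fintype.card_fin]
  simp [A, B, Matrix.vecMul, dotProduct]

theorem det_of_mul_sub_of_ite [Nontrivial m] (a : m → R) (e : R) :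
    ((Matrix.of fun i j => a i * a j) - Matrix.of fun i j => if i = j then 0 else e).det =
      e ^ (Fintype.card m - 1) *
        ((∑ i, a i) ^ 2 - (Fintype.card m - 1) * (e + ∑ i, a i ^ 2)) := by
  have hdecomp : ((Matrix.of fun i j => a i * a j) - Matrix.of fun i j => if i = j then 0 else e) =
      Matrix.scalar m e + (Matrix.vecMulVec a a + Matrix.vecMulVec (fun _ => -e) 1) := by
    ext i j
    obtain rfl | hij := eq_or_ne i j <;> simp [Matrix.vecMulVec_apply, *, sub_eq_add_neg]
  have hpow : e ^ (Fintype.card m - 1) = e ^ (Fintype.card m - 2) * e := by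
    have := Fintype.one_lt_card (α := m)
    rw [← pow_succ]
    congr 1
    omega
  have hsq : a ⬝ᵥ a = ∑ i, a i ^ 2 := by simp only [dotProduct, sq]
  have hsum : a ⬝ᵥ (fun _ => -e) = -((∑ i, a i) * e) := by
    simp only [dotProduct, mul_neg, sum_neg_distrib, sum_mul]
  have hconst : (1 : m → R) ⬝ᵥ (fun _ => -e) = -(Fintype.card m * e) := by
    simp [one_dotProduct]
  rw [hdecomp, det_scalar_add_vecMulVec_add_vecMulVec, hsq, hsum, hconst, one_dotProduct, hpow]
  ring

end Determinant

section SymmetricSums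

variable {ι R : Type*} [Fintype ι] [CommRing R]

theorem two_mul_esymm_two (η : ι → R) :
    2 * (univ.val.map η).esymm 2 = (∑ i, η i) ^ 2 - ∑ i, η i ^ 2 := by
  have newton := congrArg (MvPolynomial.aeval η) (MvPolynomial.mul_esymm_eq_sum ι R 2)
  have hfilter : {a ∈ antidiagonal 2 | a.1 < 2} = {(0, 2), (1, 1)} := by decide
  rw [hfilter, sum_pair (by decide)] at newton
  simp only [map_mul, map_add, map_sum, map_pow, map_neg, map_one, Nat.cast_ofNat, map_ofNat,
    MvPolynomial.aeval_X, MvPolynomial.aeval_esymm_eq_multiset_esymm, MvPolynomial.esymm_zero,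
    MvPolynomial.esymm_one, MvPolynomial.psum, pow_zero, pow_one] at newton
  linear_combination newton

variable [DecidableEq ι]

theorem sum_sum_erase (η : ι → R) :
    ∑ i, ∑ j ∈ univ.erase i, η j = (Fintype.card ι - 1) * ∑ i, η i := by
  simp only [sum_erase_eq_sub (mem_univ _), sum_sub_distrib, sum_const, card_univ, nsmul_eq_mul]
  ring

theorem sum_sq_sum_erase (η : ι → R) :
    ∑ i, (∑ j ∈ univ.erase i, η j) ^ 2 =
      (Fintype.card ι - 1) * (∑ i, η i) ^ 2 - 2 * (univ.val.map η).esymm 2 := by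
  simp only [sum_erase_eq_sub (mem_univ _), sub_sq, sum_add_distrib, sum_sub_distrib, sum_const,
    card_univ, nsmul_eq_mul, ← mul_sum, two_mul_esymm_two]
  ring

theorem stmt6_general [Nontrivial ι] (η : ι → R) :
    ((Matrix.of fun i j => (∑ k ∈ univ.erase i, η k) * ∑ k ∈ univ.erase j, η k) -
        Matrix.of fun i j => if i = j then 0 else (univ.val.map η).esymm 2).det =
      (Fintype.card ι - 1) * (univ.val.map η).esymm 2 ^ Fintype.card ι := by
  rw [det_of_mul_sub_of_ite, sum_sum_erase, sum_sq_sum_erase]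
  generalize (univ.val.map η).esymm 2 = e
  rw [← pow_sub_one_mul Fintype.card_ne_zero e]
  ring

end SymmetricSums

theorem stmt6 (n : ℕ) (hn : 2 ≤ n) (η : Fin n → ℝ) :
    ((Matrix.of fun i j : Fin n => sigma1rest n η i * sigma1rest n η j) -
        (Matrix.of fun i j : Fin n => if i = j then 0 else sigmaE n 2 η)).det =
      ((n : ℝ) - 1) * (sigmaE n 2 η) ^ n := by
  have : Nontrivial (Fin n) := Fin.nontrivial_iff_two_le.2 hn
  simpa only [sigmaE, sigma1rest, esymm_map_val, Fintype.card_fin] using stmt6_general η
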